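/- arXiv:math/0007060 — 2 statements merged into one kernel-verified Lean document; each statement's English description precedes it below -/
import Mathlib

section
/- (Covariant Hamilton equations, gradient case.) Let X^i_α : ℝ^p × ℝ^n → ℝ be smooth. A smooth map x : ℝ^p → ℝ^n satisfies the second-order system h^{αβ} x^i_{αβ} = g^{ih} h^{αβ} g_{jk} X^j_β ∇_h X^k_α (all quantities depending on (t,x) evaluated at (t, x(t))) if and only if there exist smooth functions u^{αi} : ℝ^p → ℝ satisfying the covariant Hamilton PDEs system: u^{αi} = h^{αβ} x^i_β and ∂u^{αi}/∂t^α + H^α_{αλ} u^{λi} + G^i_{jk} u^{αj} ∂x^k/∂t^α = g^{ih} h^{αβ} g_{jk} X^j_β ∇_h X^k_α. -/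
/-!
Only `u^{αi} = h^{αβ} x^i_β` can be a momentum. Since `∇h⁻¹ = 0`, raising an index commutes with
covariant differentiation, so the covariant divergence of this `u` is `h^{αβ} x^i_{αβ}`, and
the two systems coincide.

The compatibility `∇h⁻¹ = 0` is matrix algebra. For a fixed direction `α` let `M_α` be the matrix of
Christoffel symbols of the first kind, so that `H_α = h⁻¹ M_α` is that of the second kind and
`∂_α h = M_α + M_αᵀ`. Then `∂_α h⁻¹ = -h⁻¹ (∂_α h) h⁻¹ = -(H_α h⁻¹ + h⁻¹ H_αᵀ)`.
-/

open scoped BigOperators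

noncomputable section

/-- Partial derivative of `f : ℝ^m → ℝ` at `t` in the `α`-th coordinate direction. -/
def pd {m : ℕ} (α : Fin m) (f : (Fin m → ℝ) → ℝ) (t : Fin m → ℝ) : ℝ :=
  fderiv ℝ f t (Pi.single α 1)

/-- Componentwise inverse of a square array of reals (matrix inversion). -/
def minv {m : ℕ} (A : Fin m → Fin m → ℝ) : Fin m → Fin m → ℝ :=
  fun i j => (Matrix.of A)⁻¹ i j

/-- `√|det h(t)|`, the volume density of the metric `h`. -/
def sqrtDet {p : ℕ} (h : (Fin p → ℝ) → Fin p → Fin p → ℝ) (t : Fin p → ℝ) : ℝ :=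
  Real.sqrt |(Matrix.of (h t)).det|

/-- First jet `x^i_α = ∂x^i/∂t^α` of a map `x : ℝ^p → ℝ^n`. -/
def jet {p n : ℕ} (x : (Fin p → ℝ) → Fin n → ℝ) (t : Fin p → ℝ) :
    Fin n → Fin p → ℝ :=
  fun i α => pd α (fun s => x s i) t

/-- Christoffel symbols `G^i_{jk} = ½ g^{il}(∂g_{lj}/∂x^k + ∂g_{lk}/∂x^j − ∂g_{jk}/∂x^l)`. -/
def christoffel {m : ℕ} (g : (Fin m → ℝ) → Fin m → Fin m → ℝ)
    (i j k : Fin m) (q : Fin m → ℝ) : ℝ :=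
  (1 / 2) * ∑ l, minv (g q) i l *
    (pd k (fun y => g y l j) q + pd j (fun y => g y l k) q - pd l (fun y => g y j k) q)

/-- Covariant second jet
`x^i_{αβ} = ∂²x^i/∂t^α∂t^β − H^γ_{αβ} x^i_γ + G^i_{jk} x^j_α x^k_β`. -/
def covHess {p n : ℕ} (h : (Fin p → ℝ) → Fin p → Fin p → ℝ)
    (g : (Fin n → ℝ) → Fin n → Fin n → ℝ)
    (x : (Fin p → ℝ) → Fin n → ℝ) (i : Fin n) (α β : Fin p) (t : Fin p → ℝ) : ℝ :=
  pd α (fun s => jet x s i β) t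
    - (∑ γ, christoffel h γ α β t * jet x t i γ)
    + ∑ j, ∑ k, christoffel g i j k (x t) * jet x t j α * jet x t k β

/-- `∇_j X^i_α = ∂X^i_α/∂x^j + G^i_{jk} X^k_α`. -/
def nablaX {p n : ℕ} (g : (Fin n → ℝ) → Fin n → Fin n → ℝ)
    (X : Fin n → Fin p → (Fin p → ℝ) → (Fin n → ℝ) → ℝ)
    (j i : Fin n) (α : Fin p) (t : Fin p → ℝ) (q : Fin n → ℝ) : ℝ :=
  pd j (fun y => X i α t y) q + ∑ k, christoffel g i j k q * X k α t q

/-- `D_β X^i_α = ∂X^i_α/∂t^β − H^γ_{βα} X^i_γ`. -/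
def Dt {p n : ℕ} (h : (Fin p → ℝ) → Fin p → Fin p → ℝ)
    (X : Fin n → Fin p → (Fin p → ℝ) → (Fin n → ℝ) → ℝ)
    (β : Fin p) (i : Fin n) (α : Fin p) (t : Fin p → ℝ) (q : Fin n → ℝ) : ℝ :=
  pd β (fun s => X i α s q) t - ∑ γ, christoffel h γ β α t * X i γ t q

/-- External tensor `F_j{}^i{}_α = ∇_j X^i_α − g_{hj} g^{ik} ∇_k X^h_α`. -/
def Fext {p n : ℕ} (g : (Fin n → ℝ) → Fin n → Fin n → ℝ)
    (X : Fin n → Fin p → (Fin p → ℝ) → (Fin n → ℝ) → ℝ)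
    (j i : Fin n) (α : Fin p) (t : Fin p → ℝ) (q : Fin n → ℝ) : ℝ :=
  nablaX g X j i α t q
    - ∑ h', ∑ k, g q h' j * minv (g q) i k * nablaX g X k h' α t q

/-- Potential energy `f = ½ h^{αβ} g_{ij} X^i_α X^j_β`. -/
def potE {p n : ℕ} (h : (Fin p → ℝ) → Fin p → Fin p → ℝ)
    (g : (Fin n → ℝ) → Fin n → Fin n → ℝ)
    (X : Fin n → Fin p → (Fin p → ℝ) → (Fin n → ℝ) → ℝ)
    (t : Fin p → ℝ) (q : Fin n → ℝ) : ℝ :=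
  (1 / 2) * ∑ α, ∑ β, ∑ i, ∑ j, minv (h t) α β * g q i j * X i α t q * X j β t q

/-- A map `x` is an extremal of the first-order Lagrangian `L = L(t, x, x_·)` iff it
satisfies the Euler–Lagrange equations
`∂L/∂x^k − (d/dt^α)(∂L/∂x^k_α) = 0` along the first jet of `x`. -/
def IsExtremal {p n : ℕ}
    (L : (Fin p → ℝ) → (Fin n → ℝ) → (Fin n → Fin p → ℝ) → ℝ)
    (x : (Fin p → ℝ) → Fin n → ℝ) : Prop :=
  ∀ (t : Fin p → ℝ) (k : Fin n),
    fderiv ℝ (fun q => L t q (jet x t)) (x t) (Pi.single k 1)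
      - (∑ α, pd α
          (fun s => fderiv ℝ (fun v => L s (x s) v) (jet x s)
            (Pi.single k (Pi.single α 1))) t) = 0

section MatrixCalculus

variable {E ι : Type*} [NormedAddCommGroup E] [NormedSpace ℝ E] [Fintype ι] [DecidableEq ι]
  {k : WithTop ℕ∞} {A : E → Matrix ι ι ℝ}

theorem contDiff_matrix_det (hA : ∀ i j, ContDiff ℝ k fun s => A s i j) :
    ContDiff ℝ k fun s => (A s).det := by
  simp only [Matrix.det_apply']
  exact ContDiff.sum fun σ _ => contDiff_const.mul (contDiff_prod fun i _ => hA _ _)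

theorem contDiff_matrix_adjugate (hA : ∀ i j, ContDiff ℝ k fun s => A s i j) (a b : ι) :
    ContDiff ℝ k fun s => (A s).adjugate a b := by
  simp only [Matrix.adjugate_apply]
  refine contDiff_matrix_det fun i j => ?_
  by_cases hi : i = b
  · subst hi
    simpa only [Matrix.updateRow_self] using contDiff_const
  · simpa only [Matrix.updateRow_ne hi] using hA i j

theorem contDiff_matrix_inv (hA : ∀ i j, ContDiff ℝ k fun s => A s i j)
    (hdet : ∀ s, (A s).det ≠ 0) (a b : ι) : ContDiff ℝ k fun s => (A s)⁻¹ a b := by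
  simp only [Matrix.inv_def, Ring.inverse_eq_inv', Matrix.smul_apply, smul_eq_mul]
  exact ((contDiff_matrix_det hA).inv hdet).mul (contDiff_matrix_adjugate hA a b)

end MatrixCalculus

section PartialDerivative

variable {m : ℕ} {ι κ μ : Type*}

theorem pd_sum_mul [Fintype κ] {f g : κ → (Fin m → ℝ) → ℝ} {t : Fin m → ℝ}
    (hf : ∀ b, DifferentiableAt ℝ (f b) t) (hg : ∀ b, DifferentiableAt ℝ (g b) t) (α : Fin m) :
    pd α (fun s => ∑ b, f b s * g b s) t
      = ∑ b, pd α (f b) t * g b t + ∑ b, f b t * pd α (g b) t := by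
  unfold pd
  rw [fderiv_fun_sum fun b _ => (hf b).fun_mul (hg b), sum_apply, ← Finset.sum_add_distrib]
  refine Finset.sum_congr rfl fun b _ => ?_
  rw [fderiv_fun_mul (hf b) (hg b)]
  simp [mul_comm, add_comm]

/-- The partial derivative `∂_α A` of a matrix-valued function, taken entry by entry, so that no
norm on matrices has to be chosen. -/
def pdMatrix (α : Fin m) (A : (Fin m → ℝ) → Matrix ι κ ℝ) (t : Fin m → ℝ) : Matrix ι κ ℝ :=
  Matrix.of fun i j => pd α (fun s => A s i j) t

theorem pdMatrix_mul [Fintype κ] {A : (Fin m → ℝ) → Matrix ι κ ℝ}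
    {B : (Fin m → ℝ) → Matrix κ μ ℝ} {t : Fin m → ℝ}
    (hA : ∀ i j, DifferentiableAt ℝ (fun s => A s i j) t)
    (hB : ∀ i j, DifferentiableAt ℝ (fun s => B s i j) t) (α : Fin m) :
    pdMatrix α (fun s => A s * B s) t = pdMatrix α A t * B t + A t * pdMatrix α B t := by
  ext i j
  exact pd_sum_mul (hA i) (fun b => hB b j) α

theorem pdMatrix_const (α : Fin m) (C : Matrix ι κ ℝ) (t : Fin m → ℝ) :
    pdMatrix α (fun _ => C) t = 0 := by
  ext i j
  simp [pdMatrix, pd]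

theorem pdMatrix_inv [Fintype ι] [DecidableEq ι] {A : (Fin m → ℝ) → Matrix ι ι ℝ}
    (hA : ∀ i j, ContDiff ℝ 1 fun s => A s i j) (hdet : ∀ s, (A s).det ≠ 0)
    (α : Fin m) (t : Fin m → ℝ) :
    pdMatrix α (fun s => (A s)⁻¹) t = -((A t)⁻¹ * pdMatrix α A t * (A t)⁻¹) := by
  have hunit (s) : IsUnit (A s).det := (hdet s).isUnit
  have hprod : pdMatrix α (fun s => (A s)⁻¹) t * A t + (A t)⁻¹ * pdMatrix α A t = 0 := by
    rw [← pdMatrix_mul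
      (fun i j => (contDiff_matrix_inv hA hdet i j).differentiable one_ne_zero t)
      (fun i j => (hA i j).differentiable one_ne_zero t)]
    simp only [Matrix.nonsing_inv_mul _ (hunit _), pdMatrix_const]
  calc pdMatrix α (fun s => (A s)⁻¹) t
      = pdMatrix α (fun s => (A s)⁻¹) t * A t * (A t)⁻¹ :=
        (Matrix.mul_nonsing_inv_cancel_right _ _ (hunit t)).symm
    _ = -((A t)⁻¹ * pdMatrix α A t * (A t)⁻¹) := by
        rw [eq_neg_of_add_eq_zero_left hprod, Matrix.neg_mul]

end PartialDerivative

section LeviCivita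

open scoped Matrix

variable {m : ℕ} {h : (Fin m → ℝ) → Fin m → Fin m → ℝ}

/-- The matrix `(H_{iαj})_{ij}` of Christoffel symbols of the first kind,
`H_{iαj} = ½ (∂_j h_{iα} + ∂_α h_{ij} - ∂_i h_{αj})`. -/
def christoffelFirst (h : (Fin m → ℝ) → Fin m → Fin m → ℝ) (α : Fin m) (t : Fin m → ℝ) :
    Matrix (Fin m) (Fin m) ℝ :=
  Matrix.of fun i j => (1 / 2) *
    (pd j (fun s => h s i α) t + pd α (fun s => h s i j) t - pd i (fun s => h s α j) t)

/-- The matrix `(H^i_{αj})_{ij}` of the Levi-Civita connection in direction `α`. A vector field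
satisfies `∇_α u = ∂_α u + H_α u`, a covector field `∇_α ω = ∂_α ω - H_αᵀ ω`. -/
def christoffelMatrix (h : (Fin m → ℝ) → Fin m → Fin m → ℝ) (α : Fin m) (t : Fin m → ℝ) :
    Matrix (Fin m) (Fin m) ℝ :=
  Matrix.of fun i j => christoffel h i α j t

theorem christoffelMatrix_eq_inv_mul (h : (Fin m → ℝ) → Fin m → Fin m → ℝ) (α : Fin m)
    (t : Fin m → ℝ) :
    christoffelMatrix h α t = (Matrix.of (h t))⁻¹ * christoffelFirst h α t := by
  ext i j
  simp only [christoffelMatrix, christoffel, christoffelFirst, minv, Matrix.mul_apply,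
    Matrix.of_apply, Finset.mul_sum]
  exact Finset.sum_congr rfl fun l _ => by ring

theorem christoffelFirst_add_transpose (hsymm : ∀ t α β, h t α β = h t β α) (α : Fin m)
    (t : Fin m → ℝ) :
    christoffelFirst h α t + (christoffelFirst h α t)ᵀ
      = pdMatrix α (fun s => Matrix.of (h s)) t := by
  ext i j
  simp only [christoffelFirst, pdMatrix, Matrix.add_apply, Matrix.transpose_apply,
    Matrix.of_apply, hsymm _ j i, hsymm _ α]
  ring

theorem isSymm_inv_of {A : Fin m → Fin m → ℝ} (hA : ∀ i j, A i j = A j i) :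
    (Matrix.of A)⁻¹.IsSymm :=
  Matrix.IsSymm.inv (Matrix.IsSymm.ext fun i j => hA j i)

/-- Metric compatibility, `∇_α h⁻¹ = 0`. -/
theorem pdMatrix_metric_inv (hsymm : ∀ t α β, h t α β = h t β α)
    (hC1 : ∀ α β, ContDiff ℝ 1 fun t => h t α β) (hdet : ∀ t, (Matrix.of (h t)).det ≠ 0)
    (α : Fin m) (t : Fin m → ℝ) :
    pdMatrix α (fun s => (Matrix.of (h s))⁻¹) t
      = -(christoffelMatrix h α t * (Matrix.of (h t))⁻¹
          + (Matrix.of (h t))⁻¹ * (christoffelMatrix h α t)ᵀ) := by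
  rw [pdMatrix_inv (A := fun s => Matrix.of (h s)) hC1 hdet,
    ← christoffelFirst_add_transpose hsymm, christoffelMatrix_eq_inv_mul,
    Matrix.transpose_mul, (isSymm_inv_of (hsymm t)).eq]
  noncomm_ring

/-- Raising an index commutes with `∇_α`; the columns of `W` are covector fields. -/
theorem covDeriv_metric_inv_mul {ι : Type*} (hsymm : ∀ t α β, h t α β = h t β α)
    (hC1 : ∀ α β, ContDiff ℝ 1 fun t => h t α β) (hdet : ∀ t, (Matrix.of (h t)).det ≠ 0)
    {W : (Fin m → ℝ) → Matrix (Fin m) ι ℝ} {t : Fin m → ℝ}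
    (hW : ∀ β i, DifferentiableAt ℝ (fun s => W s β i) t) (α : Fin m) :
    pdMatrix α (fun s => (Matrix.of (h s))⁻¹ * W s) t
        + christoffelMatrix h α t * ((Matrix.of (h t))⁻¹ * W t)
      = (Matrix.of (h t))⁻¹ * (pdMatrix α W t - (christoffelMatrix h α t)ᵀ * W t) := by
  have hinv (i j : Fin m) : DifferentiableAt ℝ (fun s => (Matrix.of (h s))⁻¹ i j) t :=
    (contDiff_matrix_inv (A := fun s => Matrix.of (h s)) hC1 hdet i j).differentiable
      one_ne_zero t
  rw [pdMatrix_mul hinv hW, pdMatrix_metric_inv hsymm hC1 hdet]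
  simp only [Matrix.neg_mul, Matrix.add_mul, Matrix.mul_sub, Matrix.mul_assoc]
  abel

end LeviCivita

section Hamilton

variable {p n : ℕ} {h : (Fin p → ℝ) → Fin p → Fin p → ℝ} {x : (Fin p → ℝ) → Fin n → ℝ}
  {r : WithTop ℕ∞}

/-- The covariant second jet `x^i_{αβ} = ∂_α x^i_β - H^γ_{αβ} x^i_γ + Γ^i_{jk} x^j_α x^k_β`
for arbitrary connection coefficients `Γ i j k = Γ^i_{jk}` on the target; for those of a metric `g`
it is `covHess h g`. -/
def connHess (h : (Fin p → ℝ) → Fin p → Fin p → ℝ)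
    (Γ : Fin n → Fin n → Fin n → (Fin n → ℝ) → ℝ) (x : (Fin p → ℝ) → Fin n → ℝ)
    (i : Fin n) (α β : Fin p) (t : Fin p → ℝ) : ℝ :=
  pd α (fun s => jet x s i β) t
    - (∑ γ, christoffel h γ α β t * jet x t i γ)
    + ∑ j, ∑ k, Γ i j k (x t) * jet x t j α * jet x t k β

/-- The momenta `u^{αi} = h^{αβ} x^i_β` of a map `x`. -/
def momentum (h : (Fin p → ℝ) → Fin p → Fin p → ℝ) (x : (Fin p → ℝ) → Fin n → ℝ)
    (α : Fin p) (i : Fin n) (t : Fin p → ℝ) : ℝ :=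
  ∑ β, minv (h t) α β * jet x t i β

/-- The covariant divergence `∂_α u^{αi} + H^α_{αλ} u^{λi} + Γ^i_{jk} u^{αj} x^k_α` of momenta
`u` along a map `x`. -/
def covDiv (h : (Fin p → ℝ) → Fin p → Fin p → ℝ)
    (Γ : Fin n → Fin n → Fin n → (Fin n → ℝ) → ℝ) (x : (Fin p → ℝ) → Fin n → ℝ)
    (u : Fin p → Fin n → (Fin p → ℝ) → ℝ) (i : Fin n) (t : Fin p → ℝ) : ℝ :=
  (∑ α, pd α (u α i) t)
    + (∑ α, ∑ l, christoffel h α α l t * u l i t)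
    + (∑ α, ∑ j, ∑ k, Γ i j k (x t) * u α j t * jet x t k α)

theorem contDiff_jet (hx : ContDiff ℝ (r + 1) x) (i : Fin n) (β : Fin p) :
    ContDiff ℝ r fun s => jet x s i β :=
  ((contDiff_pi.1 hx i).fderiv_right le_rfl).clm_apply contDiff_const

theorem contDiff_momentum (hsmooth : ∀ α β, ContDiff ℝ r fun t => h t α β)
    (hdet : ∀ t, (Matrix.of (h t)).det ≠ 0) (hx : ContDiff ℝ (r + 1) x) (α : Fin p)
    (i : Fin n) : ContDiff ℝ r (momentum h x α i) :=
  ContDiff.sum fun β _ => (contDiff_matrix_inv hsmooth hdet α β).mul (contDiff_jet hx i β)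

theorem covDeriv_momentum (hsymm : ∀ t α β, h t α β = h t β α)
    (hC1 : ∀ α β, ContDiff ℝ 1 fun t => h t α β) (hdet : ∀ t, (Matrix.of (h t)).det ≠ 0)
    (hx : ContDiff ℝ 2 x) (α β : Fin p) (i : Fin n) (t : Fin p → ℝ) :
    pd α (momentum h x β i) t + ∑ l, christoffel h β α l t * momentum h x l i t
      = ∑ γ, minv (h t) β γ
          * (pd α (fun s => jet x s i γ) t - ∑ l, christoffel h l α γ t * jet x t i l) := by
  have hjet (γ : Fin p) (i : Fin n) : DifferentiableAt ℝ (fun s => jet x s i γ) t :=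
    (contDiff_jet (r := 1) hx i γ).differentiable one_ne_zero t
  exact congrFun₂ (covDeriv_metric_inv_mul hsymm hC1 hdet
    (W := fun s => (Matrix.of (jet x s)).transpose) hjet α) β i

theorem sum_connection_mul_momentum {t : Fin p → ℝ} (hsymm : ∀ α β, h t α β = h t β α)
    (Γ : Fin n → Fin n → ℝ) :
    ∑ α, ∑ j, ∑ k, Γ j k * momentum h x α j t * jet x t k α
      = ∑ α, ∑ β, minv (h t) α β * ∑ j, ∑ k, Γ j k * jet x t j α * jet x t k β := by
  have hexpand (α : Fin p) : ∑ j, ∑ k, Γ j k * momentum h x α j t * jet x t k α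
      = ∑ β, minv (h t) α β * ∑ j, ∑ k, Γ j k * jet x t j β * jet x t k α := by
    simp only [momentum, Finset.mul_sum, Finset.sum_mul]
    rw [Finset.sum_comm_cycle]
    exact Finset.sum_congr rfl fun β _ => Finset.sum_congr rfl fun j _ =>
      Finset.sum_congr rfl fun k _ => by ring
  have hminv (α β : Fin p) : minv (h t) α β = minv (h t) β α :=
    (isSymm_inv_of hsymm).apply β α
  simp only [hexpand]
  rw [Finset.sum_comm]
  exact Finset.sum_congr rfl fun β _ => Finset.sum_congr rfl fun α _ => by rw [hminv]

theorem covDiv_momentum (hsymm : ∀ t α β, h t α β = h t β α)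
    (hC1 : ∀ α β, ContDiff ℝ 1 fun t => h t α β) (hdet : ∀ t, (Matrix.of (h t)).det ≠ 0)
    (Γ : Fin n → Fin n → Fin n → (Fin n → ℝ) → ℝ) (hx : ContDiff ℝ 2 x)
    (i : Fin n) (t : Fin p → ℝ) :
    covDiv h Γ x (momentum h x) i t = ∑ α, ∑ β, minv (h t) α β * connHess h Γ x i α β t := by
  rw [covDiv, ← Finset.sum_add_distrib,
    sum_connection_mul_momentum (hsymm t) (fun j k => Γ i j k (x t))]
  simp only [covDeriv_momentum hsymm hC1 hdet hx, connHess, mul_add, Finset.sum_add_distrib]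

theorem covariant_hamilton_gradient_case_general (hr : 1 ≤ r)
    (hsymm : ∀ t α β, h t α β = h t β α) (hsmooth : ∀ α β, ContDiff ℝ r fun t => h t α β)
    (hdet : ∀ t, (Matrix.of (h t)).det ≠ 0)
    (Γ : Fin n → Fin n → Fin n → (Fin n → ℝ) → ℝ) (F : (Fin p → ℝ) → Fin n → ℝ)
    (hx : ContDiff ℝ (r + 1) x) :
    (∀ t i, ∑ α, ∑ β, minv (h t) α β * connHess h Γ x i α β t = F t i)
      ↔ ∃ u : Fin p → Fin n → (Fin p → ℝ) → ℝ,
          (∀ α i, ContDiff ℝ r (u α i))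
          ∧ (∀ t α i, u α i t = momentum h x α i t)
          ∧ (∀ t i, covDiv h Γ x u i t = F t i) := by
  have hdiv := covDiv_momentum hsymm (fun α β => (hsmooth α β).of_le hr) hdet Γ
    (hx.of_le (one_add_one_eq_two.symm.trans_le (by gcongr)))
  constructor
  · intro hsecond
    exact ⟨momentum h x, contDiff_momentum hsmooth hdet hx, fun _ _ _ => rfl,
      fun t i => (hdiv i t).trans (hsecond t i)⟩
  · rintro ⟨u, -, hu, hham⟩ t i
    obtain rfl : u = momentum h x := by
      funext α i t
      exact hu t α i
    exact (hdiv i t).symm.trans (hham t i)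

end Hamilton

/-- covariant Hamilton equations, gradient case. -/
theorem covariant_hamilton_gradient_case
    {p n : ℕ} (hp : 0 < p) (hn : 0 < n)
    (h : (Fin p → ℝ) → Fin p → Fin p → ℝ)
    (hsymm : ∀ t α β, h t α β = h t β α)
    (hsmooth : ∀ α β, ContDiff ℝ (⊤ : ℕ∞) fun t => h t α β)
    (hdet : ∀ t, (Matrix.of (h t)).det ≠ 0)
    (g : (Fin n → ℝ) → Fin n → Fin n → ℝ)
    (gsymm : ∀ q i j, g q i j = g q j i)
    (gsmooth : ∀ i j, ContDiff ℝ (⊤ : ℕ∞) fun q => g q i j)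
    (gdet : ∀ q, (Matrix.of (g q)).det ≠ 0)
    (X : Fin n → Fin p → (Fin p → ℝ) → (Fin n → ℝ) → ℝ)
    (Xsmooth : ∀ i α, ContDiff ℝ (⊤ : ℕ∞) fun z : (Fin p → ℝ) × (Fin n → ℝ) => X i α z.1 z.2)
    (x : (Fin p → ℝ) → Fin n → ℝ) (hx : ContDiff ℝ (⊤ : ℕ∞) x) :
    (∀ (t : Fin p → ℝ) (i : Fin n),
        ∑ α, ∑ β, minv (h t) α β * covHess h g x i α β t
          = ∑ h', ∑ α, ∑ β, ∑ j, ∑ k, minv (g (x t)) i h' * minv (h t) α β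
              * g (x t) j k * X j β t (x t) * nablaX g X h' k α t (x t))
      ↔ ∃ u : Fin p → Fin n → (Fin p → ℝ) → ℝ,
          (∀ (α : Fin p) (i : Fin n), ContDiff ℝ (⊤ : ℕ∞) (u α i))
          ∧ (∀ (t : Fin p → ℝ) (α : Fin p) (i : Fin n),
              u α i t = ∑ β, minv (h t) α β * jet x t i β)
          ∧ (∀ (t : Fin p → ℝ) (i : Fin n),
              (∑ α, pd α (u α i) t)
                + (∑ α, ∑ l, christoffel h α α l t * u l i t)
                + (∑ α, ∑ j, ∑ k, christoffel g i j k (x t) * u α j t * jet x t k α)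
              = ∑ h', ∑ α, ∑ β, ∑ j, ∑ k, minv (g (x t)) i h' * minv (h t) α β
                  * g (x t) j k * X j β t (x t) * nablaX g X h' k α t (x t)) := by
  exact covariant_hamilton_gradient_case_general (mod_cast le_top) hsymm hsmooth hdet
    (christoffel g) _ hx
end
end

section
/- (Continuous groups of transformations as potential maps.) Fix r ≥ 1, smooth vector field components ξ^i_a : ℝ^n → ℝ (a = 1,…,r, i = 1,…,n) and smooth functions A^a_α : ℝ^p → ℝ. Every smooth solution x : ℝ^p → ℝ^n of the first-order PDEs system x^i_α(t) = ξ^i_a(x(t)) A^a_α(t) is an extremal of the Lagrangian L = ½ h^{αβ} g_{ij} (x^i_α − ξ^i_a A^a_α)(x^j_β − ξ^j_b A^b_β) √|det h|. -/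
open scoped BigOperators

noncomputable section

/-!
The Lagrangian is locally bounded by a multiple of the squared norm of the defect `v - X(t, q)`,
where `X^i_α = ξ^i_a A^a_α`, and the defect vanishes along the first jet of a solution. A function
that is `O(‖u‖²)` near a zero of a differentiable map `u` has derivative zero there, so `∂L/∂x^k`
and `∂L/∂x^k_α` both vanish identically along the jet, and with the latter its total derivative.
-/

open Asymptotics Filter Topology

theorem hasFDerivAt_zero_of_isBigO_norm_sq {𝕜 E F G : Type*} [NontriviallyNormedField 𝕜]
    [NormedAddCommGroup E] [NormedSpace 𝕜 E] [NormedAddCommGroup F] [NormedSpace 𝕜 F]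
    [NormedAddCommGroup G] [NormedSpace 𝕜 G] {f : E → F} {u : E → G} {y : E}
    (hu : DifferentiableAt 𝕜 u y) (huy : u y = 0) (hf : f =O[𝓝 y] fun z => ‖u z‖ ^ 2) :
    HasFDerivAt f (0 : E →L[𝕜] F) y := by
  have hu_le : u =O[𝓝 y] fun z => z - y := by simpa [huy] using hu.isBigO_sub
  exact (hf.trans (hu_le.norm_norm.pow 2)).hasFDerivAt one_lt_two

theorem isBigO_sum_mul_mul_norm_sq {E R ι κ : Type*} [SeminormedRing R] [Fintype ι] [Fintype κ]
    {l : Filter E} {c : E → κ → κ → ι → ι → R} {u : E → ι → κ → R}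
    (hc : ∀ α β i j, (fun z => c z α β i j) =O[l] fun _ => (1 : ℝ)) :
    (fun z => ∑ α, ∑ β, ∑ i, ∑ j, c z α β i j * u z i α * u z j β) =O[l]
      fun z => ‖u z‖ ^ 2 := by
  have hentry (i : ι) (α : κ) : (fun z => u z i α) =O[l] fun z => ‖u z‖ :=
    .of_norm_le fun z => (norm_le_pi_norm (u z i) α).trans (norm_le_pi_norm (u z) i)
  have hterm (α β : κ) (i j : ι) :
      (fun z => c z α β i j * u z i α * u z j β) =O[l] fun z => ‖u z‖ ^ 2 := by
    simpa [sq] using ((hc α β i j).mul (hentry i α)).mul (hentry j β)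
  exact .fun_sum fun α _ => .fun_sum fun β _ => .fun_sum fun i _ => .fun_sum fun j _ =>
    hterm α β i j

section Extremals

variable {p n : ℕ} {x : (Fin p → ℝ) → Fin n → ℝ}
  {X : (Fin p → ℝ) → (Fin n → ℝ) → Fin n → Fin p → ℝ}

theorem isExtremal_of_hasFDerivAt_zero {L : (Fin p → ℝ) → (Fin n → ℝ) → (Fin n → Fin p → ℝ) → ℝ}
    (hpos : ∀ t, HasFDerivAt (fun q => L t q (jet x t)) (0 : (Fin n → ℝ) →L[ℝ] ℝ) (x t))
    (hvel : ∀ t, HasFDerivAt (L t (x t)) (0 : (Fin n → Fin p → ℝ) →L[ℝ] ℝ) (jet x t)) :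
    IsExtremal L x := by
  intro t k
  simp [pd, (hpos t).fderiv, fun s => (hvel s).fderiv]

theorem isExtremal_of_isBigO_norm_sq {L : (Fin p → ℝ) → (Fin n → ℝ) → (Fin n → Fin p → ℝ) → ℝ}
    (hX : ∀ t, DifferentiableAt ℝ (X t) (x t)) (hsol : ∀ t, jet x t = X t (x t))
    (hL : ∀ t, (fun z : (Fin n → ℝ) × (Fin n → Fin p → ℝ) => L t z.1 z.2)
      =O[𝓝 (x t, jet x t)] fun z => ‖z.2 - X t z.1‖ ^ 2) :
    IsExtremal L x := by
  refine isExtremal_of_hasFDerivAt_zero (fun t => ?position) (fun t => ?velocity)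
  case position =>
    exact hasFDerivAt_zero_of_isBigO_norm_sq ((hX t).const_sub (jet x t))
      (sub_eq_zero.mpr (hsol t))
      ((hL t).comp_tendsto (Continuous.prodMk_left (jet x t)).continuousAt)
  case velocity =>
    exact hasFDerivAt_zero_of_isBigO_norm_sq (differentiableAt_id.sub_const (X t (x t)))
      (sub_eq_zero.mpr (hsol t))
      ((hL t).comp_tendsto (Continuous.prodMk_right (x t)).continuousAt)

theorem group_solution_is_potential_map_general
    {c : (Fin p → ℝ) → (Fin n → ℝ) → Fin p → Fin p → Fin n → Fin n → ℝ} {ρ : (Fin p → ℝ) → ℝ}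
    (hc : ∀ t α β i j, ContinuousAt (fun q => c t q α β i j) (x t))
    (hX : ∀ t, DifferentiableAt ℝ (X t) (x t)) (hx : Differentiable ℝ x)
    (hsol : ∀ t, jet x t = X t (x t)) :
    IsExtremal
      (fun t q v => (1 / 2) * (∑ α, ∑ β, ∑ i, ∑ j,
        c t q α β i j * (v i α - X t q i α) * (v j β - X t q j β)) * ρ t) x := by
  refine isExtremal_of_isBigO_norm_sq hX hsol fun t => ?_
  have hform : (fun z : (Fin n → ℝ) × (Fin n → Fin p → ℝ) => ∑ α, ∑ β, ∑ i, ∑ j,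
      c t z.1 α β i j * (z.2 i α - X t z.1 i α) * (z.2 j β - X t z.1 j β))
      =O[𝓝 (x t, jet x t)] fun z => ‖z.2 - X t z.1‖ ^ 2 :=
    isBigO_sum_mul_mul_norm_sq fun α β i j => (hc t α β i j).fst'.isBigO_one ℝ
  simpa only [mul_comm _ (ρ t)] using (hform.const_mul_left (1 / 2)).const_mul_left (ρ t)

end Extremals

/-- continuous groups of transformations as potential maps: every
solution of `x^i_α = ξ^i_a(x(t)) A^a_α(t)` is an extremal of
`L = ½ h^{αβ} g_{ij}(x^i_α − ξ^i_a A^a_α)(x^j_β − ξ^j_b A^b_β)√|det h|`. -/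
theorem group_solution_is_potential_map
    {p n : ℕ} (hp : 0 < p) (hn : 0 < n)
    (h : (Fin p → ℝ) → Fin p → Fin p → ℝ)
    (hsymm : ∀ t α β, h t α β = h t β α)
    (hsmooth : ∀ α β, ContDiff ℝ (⊤ : ℕ∞) fun t => h t α β)
    (hdet : ∀ t, (Matrix.of (h t)).det ≠ 0)
    (g : (Fin n → ℝ) → Fin n → Fin n → ℝ)
    (gsymm : ∀ q i j, g q i j = g q j i)
    (gsmooth : ∀ i j, ContDiff ℝ (⊤ : ℕ∞) fun q => g q i j)
    (gdet : ∀ q, (Matrix.of (g q)).det ≠ 0)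
    {r : ℕ} (hr : 0 < r)
    (ξ : Fin r → Fin n → (Fin n → ℝ) → ℝ)
    (ξsmooth : ∀ a i, ContDiff ℝ (⊤ : ℕ∞) (ξ a i))
    (A : Fin r → Fin p → (Fin p → ℝ) → ℝ)
    (Asmooth : ∀ a α, ContDiff ℝ (⊤ : ℕ∞) (A a α))
    (x : (Fin p → ℝ) → Fin n → ℝ) (hx : ContDiff ℝ (⊤ : ℕ∞) x)
    (hsol : ∀ (t : Fin p → ℝ) (i : Fin n) (α : Fin p),
      jet x t i α = ∑ a, ξ a i (x t) * A a α t) :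
    IsExtremal
      (fun t q v =>
        (1 / 2) * (∑ α, ∑ β, ∑ i, ∑ j, minv (h t) α β * g q i j
          * (v i α - ∑ a, ξ a i q * A a α t)
          * (v j β - ∑ b, ξ b j q * A b β t)) * sqrtDet h t) x := by
  have hξ a i : Differentiable ℝ (ξ a i) := (ξsmooth a i).differentiable (by simp)
  exact group_solution_is_potential_map_general
    (c := fun t q α β i j => minv (h t) α β * g q i j)
    (X := fun t q i α => ∑ a, ξ a i q * A a α t)
    (fun t α β i j => ((gsmooth i j).continuous.const_mul (minv (h t) α β)).continuousAt)
    (fun t => by fun_prop) (hx.differentiable (by simp)) fun t => funext₂ (hsol t)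
end
end
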